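/- For levels a, b ∈ {1,…,K} with all m's strictly positive, and every site i, the normalized weights f_b satisfy, for each fixed realization of the disorder: ∂_{J_i^a} f_b = 0 if b < a; ∂_{J_i^a} f_a = β√(1−t) √(q_a − q_{a−1}) m_a f_a ω̃_a(σ_i); and ∂_{J_i^a} f_b = β√(1−t) √(q_a − q_{a−1}) m_b f_b ( ω̃_b(σ_i) − ω̃_{b−1}(σ_i) ) if b > a. -/

import Mathlib

open MeasureTheory ProbabilityTheory Filter

noncomputable section

/-! ## Gaussian disorder -/

/-- The standard (centered, unit variance) Gaussian measure on `ℝ`. -/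
def stdGauss : Measure ℝ := gaussianReal 0 1

instance : IsProbabilityMeasure stdGauss := by unfold stdGauss; infer_instance

/-- `N` i.i.d. standard Gaussian variables. -/
def gaussN (N : ℕ) : Measure (Fin N → ℝ) := Measure.pi fun _ => stdGauss

instance (N : ℕ) : IsProbabilityMeasure (gaussN N) := by unfold gaussN; infer_instance

/-- The i.i.d. standard Gaussian couplings `J_{ij}` (only entries with `i < j` are used). -/
def gaussC (N : ℕ) : Measure (Fin N → Fin N → ℝ) := Measure.pi fun _ => gaussN N

instance (N : ℕ) : IsProbabilityMeasure (gaussC N) := by unfold gaussC; infer_instance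

/-- The i.i.d. standard Gaussian one-body fields `J_i^a`, `a = 1, …, K`
(row `⟨a-1⟩ : Fin K` corresponds to the level `a` of the paper). -/
def gaussS (K N : ℕ) : Measure (Fin K → Fin N → ℝ) := Measure.pi fun _ => gaussN N

instance (K N : ℕ) : IsProbabilityMeasure (gaussS K N) := by unfold gaussS; infer_instance

/-- I.i.d. standard Gaussian couplings indexed by subsets of sites, for the p-spin model
(only the cardinality-`p` subsets are used). -/
def gaussP (N : ℕ) : Measure (Finset (Fin N) → ℝ) := Measure.pi fun _ => stdGauss

instance (N : ℕ) : IsProbabilityMeasure (gaussP N) := by unfold gaussP; infer_instance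

/-! ## Spins and overlaps -/

/-- The spin value (`±1`) of a Boolean configuration entry. -/
def spin (b : Bool) : ℝ := if b then 1 else -1

/-- The overlap `q₁₂ = N⁻¹ ∑ᵢ σᵢ⁽¹⁾ σᵢ⁽²⁾` of two replicas. -/
def overlap (N : ℕ) (σ τ : Fin N → Bool) : ℝ := (N : ℝ)⁻¹ * ∑ i, spin (σ i) * spin (τ i)

/-! ## Piecewise constant functional order parameters and the Parisi function -/

/-- One backward step of the Parisi recursion on an interval of constancy of the
functional order parameter: from `g = f(q_a, ·)`, with value `m` of the order parameter
and `s = q_a - q`, produce `f(q, ·)`. -/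
def pStep (m s : ℝ) (g : ℝ → ℝ) (y : ℝ) : ℝ :=
  if m = 0 then ∫ z, g (y + z * Real.sqrt s) ∂stdGauss
  else m⁻¹ * Real.log (∫ z, Real.exp (m * g (y + z * Real.sqrt s)) ∂stdGauss)

/-- `parisiLevel K q m β j` is the Parisi function `f(q_{K-j}, ·; x, β)` at the node
`q_{K-j}`, obtained by `j` backward steps from the final condition `f(q_K, y) = log cosh (β y)`. -/
def parisiLevel (K : ℕ) (q m : ℕ → ℝ) (β : ℝ) : ℕ → ℝ → ℝ
  | 0 => fun y => Real.log (Real.cosh (β * y))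
  | j + 1 => pStep (m (K - j)) (q (K - j) - q (K - j - 1)) (parisiLevel K q m β j)

/-- The Parisi function `f(r, y; x, β)` for a piecewise constant order parameter `x`
given by nodes `q` and values `m`:  for `q_{a-1} ≤ r ≤ q_a` it is obtained from
`f(q_a, ·)` by one backward step with value `m_a` over a time `q_a - r`. -/
def parisiF (K : ℕ) (q m : ℕ → ℝ) (β : ℝ) (r y : ℝ) : ℝ :=
  pStep (m (sInf {a : ℕ | r ≤ q a})) (q (sInf {a : ℕ | r ≤ q a}) - r)
    (parisiLevel K q m β (K - sInf {a : ℕ | r ≤ q a})) y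

/-- The functional order parameter as a function: `x(r) = m_a` for `q_{a-1} ≤ r < q_a`,
and `x(1) = m_K`. -/
def xFun (K : ℕ) (q m : ℕ → ℝ) (r : ℝ) : ℝ :=
  if 1 ≤ r then m K else m (sInf {a : ℕ | r < q a})

/-- A piecewise constant functional order parameter:
`0 = q_0 ≤ q_1 ≤ … ≤ q_K = 1`, `0 ≤ m_1 ≤ … ≤ m_K ≤ 1`,
with the conventions `m_0 = 0`, `m_{K+1} = 1`. -/
structure OrderParam where
  K : ℕ
  hK : 1 ≤ K
  q : ℕ → ℝ
  m : ℕ → ℝ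
  hq0 : q 0 = 0
  hqK : q K = 1
  hq_mono : ∀ a, a < K → q a ≤ q (a + 1)
  hm0 : m 0 = 0
  hmtop : m (K + 1) = 1
  hm1 : 0 ≤ m 1
  hm_mono : ∀ a, 1 ≤ a → a < K → m a ≤ m (a + 1)
  hmK : m K ≤ 1

/-- Guerra's trial function `ᾱ(β, h; x) = log 2 + f(0, h; x, β) - (β²/2) ∫₀¹ r x(r) dr`. -/
def trialAlpha (K : ℕ) (q m : ℕ → ℝ) (β h : ℝ) : ℝ :=
  Real.log 2 + parisiLevel K q m β K h - β ^ 2 / 2 * ∫ r in (0 : ℝ)..1, r * xFun K q m r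

/-! ## The Sherrington–Kirkpatrick model -/

/-- The SK Hamiltonian `H_N(σ, h, J) = -(1/√N) ∑_{i<j} J_{ij} σ_i σ_j - h ∑_i σ_i`. -/
def hamSK (N : ℕ) (h : ℝ) (Jc : Fin N → Fin N → ℝ) (σ : Fin N → Bool) : ℝ :=
  -(1 / Real.sqrt N) * ∑ i, ∑ j, (if i < j then Jc i j * spin (σ i) * spin (σ j) else 0)
    - h * ∑ i, spin (σ i)

/-- The SK partition function `Z_N(β, h, J)`. -/
def ZSK (N : ℕ) (β h : ℝ) (Jc : Fin N → Fin N → ℝ) : ℝ :=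
  ∑ σ : Fin N → Bool, Real.exp (-(β * hamSK N h Jc σ))

/-- The quenched average `N⁻¹ E log Z_N(β, h, J)`. -/
def quenchedFE (N : ℕ) (β h : ℝ) : ℝ :=
  (N : ℝ)⁻¹ * ∫ Jc, Real.log (ZSK N β h Jc) ∂gaussC N

/-- The ground state energy density `e_N(J, h)`, defined by
`-e_N(J, h) = N⁻¹ min_σ H_N(σ, h, J)`. -/
def eGS (N : ℕ) (h : ℝ) (Jc : Fin N → Fin N → ℝ) : ℝ :=
  -((N : ℝ)⁻¹ * ⨅ σ : Fin N → Bool, hamSK N h Jc σ)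

/-- The quenched ground state energy density `e_N(h) = E(e_N(J, h))`. -/
def eQuenched (N : ℕ) (h : ℝ) : ℝ := ∫ Jc, eGS N h Jc ∂gaussC N

/-! ## The interpolating system -/

/-- The interpolating Boltzmann factor. -/
def bFac (N K : ℕ) (β h t : ℝ) (q : ℕ → ℝ) (Jc : Fin N → Fin N → ℝ)
    (Js : Fin K → Fin N → ℝ) (σ : Fin N → Bool) : ℝ :=
  Real.exp (β * Real.sqrt (t / N) *
        ∑ i, ∑ j, (if i < j then Jc i j * spin (σ i) * spin (σ j) else 0)
      + β * h * ∑ i, spin (σ i)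
      + β * Real.sqrt (1 - t) *
          ∑ a : Fin K, Real.sqrt (q (a.val + 1) - q a.val) * ∑ i, Js a i * spin (σ i))

/-- The interpolating partition function `Z̃_N(β, h; t; x; J)`. -/
def Ztil (N K : ℕ) (β h t : ℝ) (q : ℕ → ℝ) (Jc : Fin N → Fin N → ℝ)
    (Js : Fin K → Fin N → ℝ) : ℝ :=
  ∑ σ : Fin N → Bool, bFac N K β h t q Jc Js σ

/-- `Wrec … j` is the random variable `Z_{K-j}`:  `Z_K = Z̃_N` and
`Z_{a-1} = (E_a (Z_a^{m_a}))^{1/m_a}`, where `E_a` integrates the Gaussian row `J^a`. -/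
def Wrec (N K : ℕ) (β h t : ℝ) (q m : ℕ → ℝ) :
    ℕ → (Fin N → Fin N → ℝ) → (Fin K → Fin N → ℝ) → ℝ
  | 0 => Ztil N K β h t q
  | j + 1 => fun Jc Js =>
      if hj : j < K then
        (∫ g : Fin N → ℝ,
            (Wrec N K β h t q m j Jc (Function.update Js ⟨K - 1 - j, by omega⟩ g)) ^ m (K - j)
          ∂gaussN N) ^ (m (K - j))⁻¹
      else Wrec N K β h t q m j Jc Js

/-- `Zrec … a` is the random variable `Z_a` of the broken replica interpolation. -/
def Zrec (N K : ℕ) (β h t : ℝ) (q m : ℕ → ℝ) (a : ℕ) :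
    (Fin N → Fin N → ℝ) → (Fin K → Fin N → ℝ) → ℝ :=
  Wrec N K β h t q m (K - a)

/-- The interpolating auxiliary function `α̃_N(t) = N⁻¹ E₀ log Z₀`. -/
def atilde (N K : ℕ) (β h : ℝ) (q m : ℕ → ℝ) (t : ℝ) : ℝ :=
  (N : ℝ)⁻¹ * ∫ Jc, Real.log (Wrec N K β h t q m K Jc 0) ∂gaussC N

/-- The normalized weight `f_a = Z_a^{m_a} / E_a(Z_a^{m_a}) = Z_a^{m_a} / Z_{a-1}^{m_a}`. -/
def fWeight (N K : ℕ) (β h t : ℝ) (q m : ℕ → ℝ) (a : ℕ) (Jc : Fin N → Fin N → ℝ)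
    (Js : Fin K → Fin N → ℝ) : ℝ :=
  Zrec N K β h t q m a Jc Js ^ m a / Zrec N K β h t q m (a - 1) Jc Js ^ m a

/-- The Gibbs expectation `ω(A)` of the interpolating Boltzmann factor. -/
def gibbs (N K : ℕ) (β h t : ℝ) (q : ℕ → ℝ) (A : (Fin N → Bool) → ℝ)
    (Jc : Fin N → Fin N → ℝ) (Js : Fin K → Fin N → ℝ) : ℝ :=
  (∑ σ : Fin N → Bool, A σ * bFac N K β h t q Jc Js σ) / Ztil N K β h t q Jc Js

/-- The two-replica Gibbs product expectation `Ω(A)`. -/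
def gibbs2 (N K : ℕ) (β h t : ℝ) (q : ℕ → ℝ) (A : (Fin N → Bool) → (Fin N → Bool) → ℝ)
    (Jc : Fin N → Fin N → ℝ) (Js : Fin K → Fin N → ℝ) : ℝ :=
  (∑ σ : Fin N → Bool, ∑ τ : Fin N → Bool,
      A σ τ * bFac N K β h t q Jc Js σ * bFac N K β h t q Jc Js τ) /
    Ztil N K β h t q Jc Js ^ 2

/-- `omT1 … A j` is the partially averaged state `ω̃_{K-j}(A)`:
`ω̃_K = ω` and `ω̃_{a-1}(·) = E_a (f_a ω̃_a(·))`. -/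
def omT1 (N K : ℕ) (β h t : ℝ) (q m : ℕ → ℝ) (A : (Fin N → Bool) → ℝ) :
    ℕ → (Fin N → Fin N → ℝ) → (Fin K → Fin N → ℝ) → ℝ
  | 0 => gibbs N K β h t q A
  | j + 1 => fun Jc Js =>
      if hj : j < K then
        ∫ g : Fin N → ℝ,
          fWeight N K β h t q m (K - j) Jc (Function.update Js ⟨K - 1 - j, by omega⟩ g) *
            omT1 N K β h t q m A j Jc (Function.update Js ⟨K - 1 - j, by omega⟩ g)
          ∂gaussN N
      else omT1 N K β h t q m A j Jc Js

/-- `omT2 … A j` is the partially averaged two-replica state `Ω̃_{K-j}(A)`: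
`Ω̃_K = Ω` and `Ω̃_{a-1}(·) = E_a (f_a Ω̃_a(·))`. -/
def omT2 (N K : ℕ) (β h t : ℝ) (q m : ℕ → ℝ) (A : (Fin N → Bool) → (Fin N → Bool) → ℝ) :
    ℕ → (Fin N → Fin N → ℝ) → (Fin K → Fin N → ℝ) → ℝ
  | 0 => gibbs2 N K β h t q A
  | j + 1 => fun Jc Js =>
      if hj : j < K then
        ∫ g : Fin N → ℝ,
          fWeight N K β h t q m (K - j) Jc (Function.update Js ⟨K - 1 - j, by omega⟩ g) *
            omT2 N K β h t q m A j Jc (Function.update Js ⟨K - 1 - j, by omega⟩ g)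
          ∂gaussN N
      else omT2 N K β h t q m A j Jc Js

/-- The deformed quenched average `⟨A⟩_a = E(f_1 ⋯ f_a Ω̃_a(A))` at interpolation
parameter `t`, for a function `A` of two replicas. -/
def angA (N K : ℕ) (β h t : ℝ) (q m : ℕ → ℝ) (a : ℕ)
    (A : (Fin N → Bool) → (Fin N → Bool) → ℝ) : ℝ :=
  ∫ Jc, ∫ Js,
      (∏ b ∈ Finset.Icc 1 a, fWeight N K β h t q m b Jc Js) *
        omT2 N K β h t q m A (K - a) Jc Js
    ∂gaussS K N ∂gaussC N

/-! ## Zero temperature (ground state) objects -/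

/-- The zero-temperature Parisi recursion: `parisiLevelBar K q m j` is `f̄(q_{K-j}, ·; x̄)`,
with final condition `f̄(q_K, y) = |y|`. -/
def parisiLevelBar (K : ℕ) (q m : ℕ → ℝ) : ℕ → ℝ → ℝ
  | 0 => fun y => |y|
  | j + 1 => pStep (m (K - j)) (q (K - j) - q (K - j - 1)) (parisiLevelBar K q m j)

/-- A zero-temperature piecewise constant order parameter: nodes
`0 = q_0 ≤ … ≤ q_K = 1` and nondecreasing values `0 ≤ m̄_1 ≤ … ≤ m̄_K`
(no upper bound `1`), with the convention `m̄_0 = 0`. -/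
structure ZeroTParam where
  K : ℕ
  hK : 1 ≤ K
  q : ℕ → ℝ
  m : ℕ → ℝ
  hq0 : q 0 = 0
  hqK : q K = 1
  hq_mono : ∀ a, a < K → q a ≤ q (a + 1)
  hm0 : m 0 = 0
  hm1 : 0 ≤ m 1
  hm_mono : ∀ a, 1 ≤ a → a < K → m a ≤ m (a + 1)

/-- The zero-temperature trial function `α̃(h; x̄) = f̄(0, h; x̄) - (1/2) ∫₀¹ r x̄(r) dr`. -/
def gsTrial (K : ℕ) (q m : ℕ → ℝ) (h : ℝ) : ℝ :=
  parisiLevelBar K q m K h - 1 / 2 * ∫ r in (0 : ℝ)..1, r * xFun K q m r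

/-! ## The p-spin model -/

/-- A piecewise constant functional order parameter on `[0, p/2]`:
`0 = q_0 ≤ … ≤ q_K = p/2` and `0 ≤ m_1 ≤ … ≤ m_K ≤ 1`. -/
structure POrderParam (p : ℕ) where
  K : ℕ
  hK : 1 ≤ K
  q : ℕ → ℝ
  m : ℕ → ℝ
  hq0 : q 0 = 0
  hqK : q K = p / 2
  hq_mono : ∀ a, a < K → q a ≤ q (a + 1)
  hm1 : 0 ≤ m 1
  hm_mono : ∀ a, 1 ≤ a → a < K → m a ≤ m (a + 1)
  hmK : m K ≤ 1

/-- The p-spin Hamiltonian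
`H_N(σ,h,J) = -(p!/(2N^{p-1}))^{1/2} ∑_{i_1<…<i_p} J_{i_1…i_p} σ_{i_1}⋯σ_{i_p} - h ∑_i σ_i`. -/
def hamP (p N : ℕ) (h : ℝ) (J : Finset (Fin N) → ℝ) (σ : Fin N → Bool) : ℝ :=
  -Real.sqrt ((Nat.factorial p : ℝ) / (2 * (N : ℝ) ^ (p - 1))) *
      ∑ S ∈ Finset.powersetCard p (Finset.univ : Finset (Fin N)), J S * ∏ i ∈ S, spin (σ i)
    - h * ∑ i, spin (σ i)

/-- The p-spin partition function. -/
def ZP (p N : ℕ) (β h : ℝ) (J : Finset (Fin N) → ℝ) : ℝ :=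
  ∑ σ : Fin N → Bool, Real.exp (-(β * hamP p N h J σ))

/-- The p-spin quenched average `N⁻¹ E log Z_N^{(p)}(β, h, J)`. -/
def quenchedFEP (p N : ℕ) (β h : ℝ) : ℝ :=
  (N : ℝ)⁻¹ * ∫ J, Real.log (ZP p N β h J) ∂gaussP N

/-- The functional order parameter on `[0, p/2]` as a function. -/
def xFunP (p K : ℕ) (q m : ℕ → ℝ) (r : ℝ) : ℝ :=
  if (p : ℝ) / 2 ≤ r then m K else m (sInf {a : ℕ | r < q a})

/-- The change of variables `q̄(r)` defined by `2r = p q̄^{p-1}`. -/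
def qBar (p : ℕ) (r : ℝ) : ℝ := (2 * r / p) ^ (((p : ℝ) - 1)⁻¹)

/-- The p-spin trial function
`ᾱ_p(β, h; x) = log 2 + f(0, h; x, β) - (β²/2) ∫₀^{p/2} q̄(r) x(r) dr`. -/
def trialAlphaP (p K : ℕ) (q m : ℕ → ℝ) (β h : ℝ) : ℝ :=
  Real.log 2 + parisiLevel K q m β K h
    - β ^ 2 / 2 * ∫ r in (0 : ℝ)..((p : ℝ) / 2), qBar p r * xFunP p K q m r

structure LipLog {K N : ℕ} (L : ℝ) (F : (Fin K → Fin N → ℝ) → ℝ) : Prop where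
  pos : ∀ x, 0 < F x
  lip : ∀ x y, F y ≤ Real.exp (L * ‖y - x‖) * F x

lemma LipLog.cont {K N : ℕ} {L : ℝ} {F : (Fin K → Fin N → ℝ) → ℝ} (hL : 0 ≤ L)
    (hF : LipLog L F) : Continuous F := by
  have h1 : ∀ x y, Real.log (F y) - Real.log (F x) ≤ L * ‖y - x‖ := by
    intro x y
    have := Real.log_le_log (hF.pos y) (hF.lip x y)
    rw [Real.log_mul (Real.exp_pos _).ne' (hF.pos x).ne', Real.log_exp] at this
    linarith
  have h2 : LipschitzWith (Real.toNNReal L) (fun x => Real.log (F x)) := by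
    apply LipschitzWith.of_dist_le_mul
    intro x y
    rw [Real.coe_toNNReal _ hL, Real.dist_eq, dist_eq_norm, abs_le]
    have a1 := h1 x y
    have a2 := h1 y x
    rw [norm_sub_rev] at a1
    constructor <;> linarith
  have h3 : F = fun x => Real.exp (Real.log (F x)) := by
    funext x; rw [Real.exp_log (hF.pos x)]
  rw [h3]
  exact Real.continuous_exp.comp h2.continuous

lemma integrable_exp_norm (N : ℕ) (L : ℝ) (hL : 0 ≤ L) :
    Integrable (fun g : Fin N → ℝ => Real.exp (L * ‖g‖)) (gaussN N) := by
  have h0 : Integrable (fun x : ℝ => Real.exp (L * |x|)) stdGauss := by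
    have := integrable_exp_mul_abs (X := fun x : ℝ => x) (μ := gaussianReal 0 1) (t := L)
      (integrable_exp_mul_gaussianReal L) (integrable_exp_mul_gaussianReal (-L))
    exact this
  have h1 : Integrable (fun g : Fin N → ℝ => ∏ i, Real.exp (L * |g i|)) (gaussN N) := by
    unfold gaussN
    exact Integrable.fintype_prod (fun _ => h0)
  refine h1.mono' (by fun_prop) (ae_of_all _ fun g => ?_)
  rw [Real.norm_eq_abs, abs_of_pos (Real.exp_pos _), ← Real.exp_sum, Real.exp_le_exp,
    ← Finset.mul_sum]
  apply mul_le_mul_of_nonneg_left _ hL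
  rw [pi_norm_le_iff_of_nonneg (Finset.sum_nonneg fun i _ => abs_nonneg _)]
  intro i
  exact Finset.single_le_sum (f := fun i => |g i|) (fun i _ => abs_nonneg _) (Finset.mem_univ i)

lemma norm_update_sub {K N : ℕ} (x y : Fin K → Fin N → ℝ) (k : Fin K) (g : Fin N → ℝ) :
    ‖Function.update y k g - Function.update x k g‖ ≤ ‖y - x‖ := by
  rw [pi_norm_le_iff_of_nonneg (norm_nonneg _)]
  intro a
  by_cases hak : a = k
  · subst hak; simp
  · simpa [hak] using norm_le_pi_norm (y - x) a

lemma norm_update_sub_self {K N : ℕ} (x : Fin K → Fin N → ℝ) (k : Fin K) (g : Fin N → ℝ) :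
    ‖Function.update x k g - x‖ ≤ ‖g‖ + ‖x‖ := by
  rw [pi_norm_le_iff_of_nonneg (by positivity)]
  intro a
  by_cases hak : a = k
  · subst hak
    simp only [Pi.sub_apply, Function.update_self]
    exact (norm_sub_le _ _).trans (by gcongr; exact norm_le_pi_norm x a)
  · simp only [Pi.sub_apply, Function.update_of_ne hak, sub_self, norm_zero]; positivity

lemma continuous_upd {K N : ℕ} (k : Fin K) :
    Continuous (fun p : (Fin K → Fin N → ℝ) × (Fin N → ℝ) => Function.update p.1 k p.2) :=
  continuous_fst.update k continuous_snd

lemma LipLog.rpow_le {K N : ℕ} {L m : ℝ} {F : (Fin K → Fin N → ℝ) → ℝ} (hm : 0 < m)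
    (hF : LipLog L F) (x y : Fin K → Fin N → ℝ) :
    F y ^ m ≤ Real.exp (L * m * ‖y - x‖) * F x ^ m := by
  have := Real.rpow_le_rpow (hF.pos y).le (hF.lip x y) hm.le
  rw [Real.mul_rpow (Real.exp_pos _).le (hF.pos x).le, ← Real.exp_mul] at this
  convert this using 3; ring

def PInt {K N : ℕ} (F : (Fin K → Fin N → ℝ) → ℝ) (k : Fin K) (m : ℝ)
    (x : Fin K → Fin N → ℝ) : ℝ :=
  ∫ g : Fin N → ℝ, F (Function.update x k g) ^ m ∂gaussN N

lemma LipLog.contm {K N : ℕ} {L m : ℝ} {F : (Fin K → Fin N → ℝ) → ℝ} (hL : 0 ≤ L) 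
    (hF : LipLog L F) : Continuous (fun x => F x ^ m) :=
  (hF.cont hL).rpow_const fun x => Or.inl (hF.pos x).ne'

lemma LipLog.integrable {K N : ℕ} {L m : ℝ} {F : (Fin K → Fin N → ℝ) → ℝ} (hL : 0 ≤ L)
    (hm : 0 < m) (hF : LipLog L F) (k : Fin K) (x : Fin K → Fin N → ℝ) :
    Integrable (fun g => F (Function.update x k g) ^ m) (gaussN N) := by
  have h1 := (integrable_exp_norm N (L * m) (by positivity)).const_mul
    (Real.exp (L * m * ‖x‖) * F x ^ m)
  have hc : Continuous (fun g => F (Function.update x k g) ^ m) :=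
    (hF.contm hL).comp ((continuous_upd k).comp (by fun_prop : Continuous fun g => (x, g)))
  refine h1.mono' hc.aestronglyMeasurable (ae_of_all _ fun g => ?_)
  rw [Real.norm_eq_abs, abs_of_pos (Real.rpow_pos_of_pos (hF.pos _) _)]
  refine (hF.rpow_le hm x _).trans ?_
  rw [mul_right_comm (Real.exp (L * m * ‖x‖)), ← Real.exp_add, ← mul_add]
  have := Real.rpow_nonneg (hF.pos x).le m
  gcongr
  rw [add_comm]
  exact norm_update_sub_self x k g

lemma LipLog.PInt_pos {K N : ℕ} {L m : ℝ} {F : (Fin K → Fin N → ℝ) → ℝ} (hL : 0 ≤ L)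
    (hm : 0 < m) (hF : LipLog L F) (k : Fin K) (x : Fin K → Fin N → ℝ) :
    0 < PInt F k m x := by
  unfold PInt
  rw [integral_pos_iff_support_of_nonneg
    (fun g => Real.rpow_nonneg (hF.pos _).le m) (hF.integrable hL hm k x)]
  have : Function.support (fun g => F (Function.update x k g) ^ m) = Set.univ := by
    ext g
    simp [(Real.rpow_pos_of_pos (hF.pos (Function.update x k g)) m).ne']
  rw [this]; simp

lemma LipLog.step {K N : ℕ} {L m : ℝ} {F : (Fin K → Fin N → ℝ) → ℝ} (hL : 0 ≤ L)
    (hm : 0 < m) (hF : LipLog L F) (k : Fin K) :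
    LipLog L (fun x => PInt F k m x ^ m⁻¹) where
  pos x := Real.rpow_pos_of_pos (hF.PInt_pos hL hm k x) _
  lip x y := by
    have h1 : PInt F k m y ≤ Real.exp (L * m * ‖y - x‖) * PInt F k m x := by
      unfold PInt
      rw [← integral_const_mul]
      apply integral_mono (hF.integrable hL hm k y) ((hF.integrable hL hm k x).const_mul _)
      intro g
      refine (hF.rpow_le hm (Function.update x k g) _).trans ?_
      have := Real.rpow_nonneg (hF.pos (Function.update x k g)).le m
      dsimp only
      gcongr
      exact norm_update_sub x y k g
    have h2 := Real.rpow_le_rpow (hF.PInt_pos hL hm k y).le h1 (inv_pos.2 hm).le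
    rw [Real.mul_rpow (Real.exp_pos _).le (hF.PInt_pos hL hm k x).le, ← Real.exp_mul] at h2
    convert h2 using 3
    field_simp

/-- The line in direction `(A, i)` through `x`. -/
abbrev pth {K N : ℕ} (x : Fin K → Fin N → ℝ) (A : Fin K) (i : Fin N) (u : ℝ) :
    Fin K → Fin N → ℝ := Function.update x A (Function.update (x A) i u)

lemma pth_pth {K N : ℕ} (x : Fin K → Fin N → ℝ) (A : Fin K) (i : Fin N) (u v : ℝ) :
    pth (pth x A i u) A i v = pth x A i v := by simp [pth]

lemma pth_self {K N : ℕ} (x : Fin K → Fin N → ℝ) (A : Fin K) (i : Fin N) :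
    pth x A i (x A i) = x := by simp [pth]

lemma pth_apply {K N : ℕ} (x : Fin K → Fin N → ℝ) (A : Fin K) (i : Fin N) (u : ℝ) :
    pth x A i u A i = u := by simp [pth]

lemma update_pth {K N : ℕ} (x : Fin K → Fin N → ℝ) (A k : Fin K) (hk : k ≠ A) (i : Fin N) (u : ℝ)
    (g : Fin N → ℝ) :
    Function.update (pth x A i u) k g = pth (Function.update x k g) A i u := by
  unfold pth
  rw [Function.update_of_ne hk.symm, Function.update_comm hk.symm]

lemma norm_pth_sub {K N : ℕ} (x : Fin K → Fin N → ℝ) (A : Fin K) (i : Fin N) (u : ℝ) :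
    ‖pth x A i u - x‖ ≤ |u - x A i| := by
  rw [pi_norm_le_iff_of_nonneg (abs_nonneg _)]
  intro a
  by_cases ha : a = A
  · subst ha
    rw [pi_norm_le_iff_of_nonneg (abs_nonneg _)]
    intro j
    by_cases hj : j = i
    · subst hj; simp [pth]
    · simp [pth, hj]
  · simp [pth, ha]

lemma step_deriv {K N : ℕ} {L m : ℝ} {F ω : (Fin K → Fin N → ℝ) → ℝ} (hL : 0 ≤ L)
    (hm : 0 < m) (hF : LipLog L F) (hω : Measurable ω) (hω1 : ∀ x, |ω x| ≤ 1)
    (k A : Fin K) (hk : k ≠ A) (i : Fin N) (c : ℝ)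
    (hd : ∀ x, HasDerivAt (fun u => F (pth x A i u)) (c * F x * ω x) (x A i))
    (x : Fin K → Fin N → ℝ) :
    HasDerivAt (fun u => PInt F k m (pth x A i u) ^ m⁻¹)
      (c * PInt F k m x ^ m⁻¹ *
        ∫ g, F (Function.update x k g) ^ m / PInt F k m x * ω (Function.update x k g) ∂gaussN N)
      (x A i) := by
  have hd' : ∀ x u, HasDerivAt (fun u => F (pth x A i u) ^ m)
      (m * c * F (pth x A i u) ^ m * ω (pth x A i u)) u := by
    intro x u
    have h1 := hd (pth x A i u)
    simp only [pth_pth, pth_apply] at h1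
    have h2 := h1.rpow_const (p := m) (Or.inl (hF.pos _).ne')
    convert h2 using 1
    rw [Real.rpow_sub_one (hF.pos _).ne']
    have := (hF.pos (pth x A i u)).ne'
    field_simp
  have hmeas : Measurable (fun g : Fin N → ℝ => Function.update x k g) :=
    ((continuous_upd k).comp (by fun_prop : Continuous fun g => (x, g))).measurable
  have key := hasDerivAt_integral_of_dominated_loc_of_deriv_le (μ := gaussN N)
    (F := fun u g => F (pth (Function.update x k g) A i u) ^ m)
    (F' := fun u g => m * c * F (pth (Function.update x k g) A i u) ^ m
      * ω (pth (Function.update x k g) A i u))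
    (x₀ := x A i) (s := Metric.ball (x A i) 1)
    (bound := fun g => m * |c| * (Real.exp (L * m) * F (Function.update x k g) ^ m))
    (Metric.ball_mem_nhds _ one_pos)
    (Eventually.of_forall fun u => by
      simp_rw [← update_pth x A k hk]
      exact (hF.integrable hL hm k _).aestronglyMeasurable)
    (by
      simp_rw [← update_pth x A k hk]
      exact (hF.integrable hL hm k _))
    (by
      simp_rw [← update_pth x A k hk, pth_self]
      refine Measurable.aestronglyMeasurable ?_
      exact (((hF.contm hL).measurable.comp hmeas).const_mul _).mul (hω.comp hmeas))
    (ae_of_all _ fun g u hu => by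
      have hp := Real.rpow_pos_of_pos (hF.pos (pth (Function.update x k g) A i u)) m
      rw [Real.norm_eq_abs, abs_mul, abs_mul, abs_mul, abs_of_pos hm, abs_of_pos hp]
      have e1 : F (pth (Function.update x k g) A i u) ^ m ≤
          Real.exp (L * m) * F (Function.update x k g) ^ m := by
        refine (hF.rpow_le hm (Function.update x k g) _).trans ?_
        have := Real.rpow_nonneg (hF.pos (Function.update x k g)).le m
        have e2 := norm_pth_sub (Function.update x k g) A i u
        rw [Function.update_of_ne hk.symm] at e2
        have e3 : |u - x A i| < 1 := by simpa [Real.dist_eq] using hu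
        have e4 : L * m * ‖pth (Function.update x k g) A i u - Function.update x k g‖
            ≤ L * m * 1 := by gcongr; linarith
        rw [mul_one] at e4
        gcongr
      calc _ ≤ m * |c| * F (pth (Function.update x k g) A i u) ^ m * 1 := by
            gcongr; exact hω1 _
        _ ≤ _ := by rw [mul_one]; gcongr)
    (((hF.integrable hL hm k x).const_mul _).const_mul _)
    (ae_of_all _ fun g u _ => hd' _ u)
  have k2 := key.2
  simp_rw [← update_pth x A k hk, pth_self] at k2
  have hP := hF.PInt_pos hL hm k x
  have k3 : HasDerivAt (fun u => PInt F k m (pth x A i u) ^ m⁻¹) _ (x A i) :=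
    HasDerivAt.rpow_const (p := m⁻¹) k2 (Or.inl (by rw [pth_self]; exact hP.ne'))
  convert k3 using 1
  rw [pth_self]
  rw [Real.rpow_sub_one hP.ne']
  have e1 : ∀ g, F (Function.update x k g) ^ m / PInt F k m x * ω (Function.update x k g)
     = (PInt F k m x)⁻¹ * (F (Function.update x k g) ^ m * ω (Function.update x k g)) := by
    intro g; ring
  have e2 : ∀ g, m * c * F (Function.update x k g) ^ m * ω (Function.update x k g)
     = (m * c) * (F (Function.update x k g) ^ m * ω (Function.update x k g)) := by
    intro g; ring
  simp_rw [e1, e2, integral_const_mul]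
  field_simp

lemma step_omega {K N : ℕ} {L m : ℝ} {F ω : (Fin K → Fin N → ℝ) → ℝ} (hL : 0 ≤ L)
    (hm : 0 < m) (hF : LipLog L F) (hω : Measurable ω) (hω1 : ∀ x, |ω x| ≤ 1)
    (k : Fin K) :
    Measurable (fun x => ∫ g, F (Function.update x k g) ^ m / PInt F k m x *
      ω (Function.update x k g) ∂gaussN N) ∧ ∀ x, |∫ g, F (Function.update x k g) ^ m /
        PInt F k m x * ω (Function.update x k g) ∂gaussN N| ≤ 1 := by
  have hu := (continuous_upd (N := N) k).measurable
  have hFm := (hF.contm (m := m) hL).measurable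
  have hP : Measurable (PInt F k m) := by
    have : StronglyMeasurable (fun x => ∫ g, F (Function.update x k g) ^ m ∂gaussN N) :=
      StronglyMeasurable.integral_prod_right' (ν := gaussN N)
        (f := fun p : (Fin K → Fin N → ℝ) × (Fin N → ℝ) => F (Function.update p.1 k p.2) ^ m)
        (hFm.comp hu).stronglyMeasurable
    exact this.measurable
  constructor
  · have : StronglyMeasurable (fun x => ∫ g, F (Function.update x k g) ^ m / PInt F k m x *
      ω (Function.update x k g) ∂gaussN N) :=
      StronglyMeasurable.integral_prod_right' (ν := gaussN N)
        (f := fun p : (Fin K → Fin N → ℝ) × (Fin N → ℝ) => F (Function.update p.1 k p.2) ^ m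
          / PInt F k m p.1 * ω (Function.update p.1 k p.2))
        (((hFm.comp hu).div (hP.comp measurable_fst)).mul (hω.comp hu)).stronglyMeasurable
    exact this.measurable
  · intro x
    have hPx := hF.PInt_pos hL hm k x
    have h1 : ∫ g, F (Function.update x k g) ^ m / PInt F k m x ∂gaussN N = 1 := by
      rw [integral_div]; exact div_self hPx.ne'
    rw [← h1, ← Real.norm_eq_abs]
    apply norm_integral_le_of_norm_le ((hF.integrable hL hm k x).div_const _)
    refine ae_of_all _ fun g => ?_
    have hp := div_pos (Real.rpow_pos_of_pos (hF.pos (Function.update x k g)) m) hPx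
    rw [Real.norm_eq_abs, abs_mul, abs_of_pos hp]
    exact mul_le_of_le_one_right hp.le (hω1 _)

lemma abs_spin (b : Bool) : |spin b| = 1 := by cases b <;> simp [spin]

/-- The Lipschitz constant of the logarithm of the Boltzmann factor. -/
def lipC (N K : ℕ) (β t : ℝ) (q : ℕ → ℝ) : ℝ :=
  |β * Real.sqrt (1 - t)| * ∑ a : Fin K, Real.sqrt (q (a.val + 1) - q a.val) * N

lemma lipC_nonneg (N K : ℕ) (β t : ℝ) (q : ℕ → ℝ) : 0 ≤ lipC N K β t q := by
  unfold lipC; positivity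

lemma bFac_lip (N K : ℕ) (β h t : ℝ) (q : ℕ → ℝ) (Jc : Fin N → Fin N → ℝ) (σ : Fin N → Bool) :
    LipLog (lipC N K β t q) (fun x : Fin K → Fin N → ℝ => bFac N K β h t q Jc x σ) where
  pos x := Real.exp_pos _
  lip x y := by
    unfold bFac
    rw [← Real.exp_add, Real.exp_le_exp]
    have h1 : β * Real.sqrt (1 - t) *
          ∑ a : Fin K, Real.sqrt (q (a.val + 1) - q a.val) * ∑ i, y a i * spin (σ i)
        - β * Real.sqrt (1 - t) *
          ∑ a : Fin K, Real.sqrt (q (a.val + 1) - q a.val) * ∑ i, x a i * spin (σ i)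
        = β * Real.sqrt (1 - t) *
          ∑ a : Fin K, Real.sqrt (q (a.val + 1) - q a.val) * ∑ i, (y - x) a i * spin (σ i) := by
      rw [← mul_sub, ← Finset.sum_sub_distrib]
      congr 1
      refine Finset.sum_congr rfl fun a _ => ?_
      rw [← mul_sub, ← Finset.sum_sub_distrib]
      congr 1
      refine Finset.sum_congr rfl fun a _ => ?_
      simp only [Pi.sub_apply]; ring
    have h2 : |∑ a : Fin K, Real.sqrt (q (a.val + 1) - q a.val) * ∑ i, (y - x) a i * spin (σ i)|
        ≤ (∑ a : Fin K, Real.sqrt (q (a.val + 1) - q a.val) * N) * ‖y - x‖ := by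
      rw [Finset.sum_mul]
      refine (Finset.abs_sum_le_sum_abs _ _).trans (Finset.sum_le_sum fun a _ => ?_)
      rw [abs_mul, abs_of_nonneg (Real.sqrt_nonneg _), mul_assoc]
      refine mul_le_mul_of_nonneg_left ?_ (Real.sqrt_nonneg _)
      calc |∑ i, (y - x) a i * spin (σ i)| ≤ ∑ i : Fin N, ‖y - x‖ := by
            refine (Finset.abs_sum_le_sum_abs _ _).trans (Finset.sum_le_sum fun i _ => ?_)
            rw [abs_mul, abs_spin, mul_one]
            exact (norm_le_pi_norm ((y - x) a) i).trans (norm_le_pi_norm (y - x) a)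
        _ = _ := by simp
    have h3 := (le_abs_self (β * Real.sqrt (1 - t) *
          ∑ a : Fin K, Real.sqrt (q (a.val + 1) - q a.val) * ∑ i, (y - x) a i * spin (σ i)))
    rw [abs_mul] at h3
    have h4 := mul_le_mul_of_nonneg_left h2 (abs_nonneg (β * Real.sqrt (1 - t)))
    rw [← mul_assoc] at h4
    unfold lipC
    linarith

lemma Ztil_lip (N K : ℕ) (β h t : ℝ) (q : ℕ → ℝ) (Jc : Fin N → Fin N → ℝ) :
    LipLog (lipC N K β t q) (Ztil N K β h t q Jc) where
  pos x := Finset.sum_pos (fun σ _ => Real.exp_pos _) Finset.univ_nonempty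
  lip x y := by
    unfold Ztil
    rw [Finset.mul_sum]
    exact Finset.sum_le_sum fun σ _ => (bFac_lip N K β h t q Jc σ).lip x y

lemma gibbs_props (N K : ℕ) (β h t : ℝ) (q : ℕ → ℝ) (Jc : Fin N → Fin N → ℝ) (i : Fin N) :
    Measurable (gibbs N K β h t q (fun σ => spin (σ i)) Jc) ∧
    ∀ x, |gibbs N K β h t q (fun σ => spin (σ i)) Jc x| ≤ 1 := by
  have hL := lipC_nonneg N K β t q
  constructor
  · unfold gibbs
    refine Measurable.div ?_ ((Ztil_lip N K β h t q Jc).cont hL).measurable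
    exact Finset.measurable_sum _ fun σ _ =>
      (((bFac_lip N K β h t q Jc σ).cont hL).measurable).const_mul _
  · intro x
    unfold gibbs
    have hp := (Ztil_lip N K β h t q Jc).pos x
    rw [abs_div, abs_of_pos hp, div_le_one hp]
    unfold Ztil
    refine (Finset.abs_sum_le_sum_abs _ _).trans (Finset.sum_le_sum fun σ _ => ?_)
    rw [abs_mul, abs_spin, one_mul, abs_of_pos ((bFac_lip N K β h t q Jc σ).pos x)]

lemma bFac_deriv (N K : ℕ) (β h t : ℝ) (q : ℕ → ℝ) (Jc : Fin N → Fin N → ℝ) (σ : Fin N → Bool)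
    (A : Fin K) (i : Fin N) (x : Fin K → Fin N → ℝ) :
    HasDerivAt (fun u => bFac N K β h t q Jc (pth x A i u) σ)
      (β * Real.sqrt (1 - t) * Real.sqrt (q (A.val + 1) - q A.val) *
        (spin (σ i) * bFac N K β h t q Jc x σ)) (x A i) := by
  have h0 : ∀ a j, HasDerivAt (fun u => pth x A i u a j) (if a = A ∧ j = i then 1 else 0)
      (x A i) := by
    intro a j
    by_cases ha : a = A
    · subst ha
      by_cases hj : j = i
      · subst hj
        simpa [pth] using hasDerivAt_id' (x a j)
      · simpa [pth, hj] using hasDerivAt_const (x a i) (x a j)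
    · simpa [pth, ha] using hasDerivAt_const (x A i) (x a j)
  have h1 : HasDerivAt (fun u => ∑ a : Fin K, Real.sqrt (q (a.val + 1) - q a.val) *
      ∑ j, pth x A i u a j * spin (σ j))
      (∑ a : Fin K, Real.sqrt (q (a.val + 1) - q a.val) *
      ∑ j, (if a = A ∧ j = i then 1 else 0) * spin (σ j)) (x A i) :=
    HasDerivAt.fun_sum fun a _ => (HasDerivAt.fun_sum fun j _ => (h0 a j).mul_const _).const_mul _
  have h2 : (∑ a : Fin K, Real.sqrt (q (a.val + 1) - q a.val) *
      ∑ j, (if a = A ∧ j = i then 1 else 0) * spin (σ j)) =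
      Real.sqrt (q (A.val + 1) - q A.val) * spin (σ i) := by
    rw [Finset.sum_eq_single A (fun a _ ha => by simp [ha]) (by simp)]
    rw [Finset.sum_eq_single i (fun a _ ha => by simp [ha]) (by simp)]
    simp
  rw [h2] at h1
  have h3 := ((h1.const_mul (β * Real.sqrt (1 - t))).const_add
    (β * Real.sqrt (t / N) *
        ∑ i, ∑ j, (if i < j then Jc i j * spin (σ i) * spin (σ j) else 0)
      + β * h * ∑ i, spin (σ i))).exp
  rw [pth_self] at h3
  unfold bFac
  convert h3 using 1
  ring

lemma Ztil_deriv (N K : ℕ) (β h t : ℝ) (q : ℕ → ℝ) (Jc : Fin N → Fin N → ℝ)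
    (A : Fin K) (i : Fin N) (x : Fin K → Fin N → ℝ) :
    HasDerivAt (fun u => Ztil N K β h t q Jc (pth x A i u))
      (β * Real.sqrt (1 - t) * Real.sqrt (q (A.val + 1) - q A.val) *
        Ztil N K β h t q Jc x * gibbs N K β h t q (fun σ => spin (σ i)) Jc x) (x A i) := by
  have h1 : HasDerivAt (fun u => Ztil N K β h t q Jc (pth x A i u)) _ (x A i) :=
    HasDerivAt.fun_sum (u := Finset.univ) fun σ _ => bFac_deriv N K β h t q Jc σ A i x
  convert h1 using 1
  unfold gibbs
  have hp := ((Ztil_lip N K β h t q Jc).pos x).ne'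
  rw [← Finset.mul_sum]
  field_simp

lemma PInt_update {K N : ℕ} (F : (Fin K → Fin N → ℝ) → ℝ) (k : Fin K) (m : ℝ)
    (x : Fin K → Fin N → ℝ) (g : Fin N → ℝ) :
    PInt F k m (Function.update x k g) = PInt F k m x := by simp [PInt]

lemma Wrec_succ (N K : ℕ) (β h t : ℝ) (q m : ℕ → ℝ) (Jc : Fin N → Fin N → ℝ) (j : ℕ)
    (hj : j < K) :
    Wrec N K β h t q m (j + 1) Jc = fun x : Fin K → Fin N → ℝ =>
      PInt (Wrec N K β h t q m j Jc) ⟨K - 1 - j, by omega⟩ (m (K - j)) x ^ (m (K - j))⁻¹ := by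
  funext x
  simp only [Wrec, hj, dite_true, PInt]

lemma Wrec_lip (N K : ℕ) (β h t : ℝ) (q m : ℕ → ℝ) (hm : ∀ b, 1 ≤ b → b ≤ K → 0 < m b)
    (Jc : Fin N → Fin N → ℝ) (j : ℕ) (hj : j ≤ K) :
    LipLog (lipC N K β t q) (Wrec N K β h t q m j Jc) := by
  induction j with
  | zero => exact Ztil_lip N K β h t q Jc
  | succ j ih =>
    rw [Wrec_succ N K β h t q m Jc j hj]
    exact (ih (by omega)).step (lipC_nonneg N K β t q) (hm _ (by omega) (by omega)) _

lemma Wrec_indep (N K : ℕ) (β h t : ℝ) (q m : ℕ → ℝ)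
    (Jc : Fin N → Fin N → ℝ) (j : ℕ) (hj : j ≤ K) (k : Fin K) (hk : K - j ≤ k.val)
    (x : Fin K → Fin N → ℝ) (g : Fin N → ℝ) :
    Wrec N K β h t q m j Jc (Function.update x k g) = Wrec N K β h t q m j Jc x := by
  induction j generalizing x with
  | zero => exact absurd k.isLt (by omega)
  | succ j ih =>
    rw [Wrec_succ N K β h t q m Jc j hj]
    by_cases hkj : k = ⟨K - 1 - j, by omega⟩
    · rw [hkj]
      simp only [PInt_update]
    · have hkj' : k.val ≠ K - 1 - j := fun e => hkj (Fin.ext e)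
      simp only [PInt]
      simp_rw [Function.update_comm hkj, ih (by omega) (by omega)]

lemma omT1_succ (N K : ℕ) (β h t : ℝ) (q m : ℕ → ℝ) (hm : ∀ b, 1 ≤ b → b ≤ K → 0 < m b)
    (O : (Fin N → Bool) → ℝ) (Jc : Fin N → Fin N → ℝ) (j : ℕ) (hj : j < K) :
    omT1 N K β h t q m O (j + 1) Jc = fun x : Fin K → Fin N → ℝ =>
      ∫ g, Wrec N K β h t q m j Jc (Function.update x ⟨K - 1 - j, by omega⟩ g) ^ m (K - j) /
        PInt (Wrec N K β h t q m j Jc) ⟨K - 1 - j, by omega⟩ (m (K - j)) x *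
        omT1 N K β h t q m O j Jc (Function.update x ⟨K - 1 - j, by omega⟩ g) ∂gaussN N := by
  funext x
  simp only [omT1, hj, dite_true]
  congr 1
  funext g
  congr 1
  unfold fWeight Zrec
  have e1 : K - (K - j) = j := by omega
  have e2 : K - (K - j - 1) = j + 1 := by omega
  have hmj := hm (K - j) (by omega) (by omega)
  rw [e1, e2, Wrec_succ N K β h t q m Jc j hj]
  simp only [PInt_update]
  rw [Real.rpow_inv_rpow ((Wrec_lip N K β h t q m hm Jc j hj.le).PInt_pos
    (lipC_nonneg N K β t q) hmj _ x).le hmj.ne']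

lemma omT1_props (N K : ℕ) (β h t : ℝ) (q m : ℕ → ℝ) (hm : ∀ b, 1 ≤ b → b ≤ K → 0 < m b)
    (Jc : Fin N → Fin N → ℝ) (i : Fin N) (j : ℕ) (hj : j ≤ K) :
    Measurable (omT1 N K β h t q m (fun σ => spin (σ i)) j Jc) ∧
    ∀ x, |omT1 N K β h t q m (fun σ => spin (σ i)) j Jc x| ≤ 1 := by
  induction j with
  | zero => exact gibbs_props N K β h t q Jc i
  | succ j ih =>
    obtain ⟨h1, h2⟩ := ih (by omega)
    rw [omT1_succ N K β h t q m hm _ Jc j hj]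
    exact step_omega (lipC_nonneg N K β t q) (hm _ (by omega) (by omega))
      (Wrec_lip N K β h t q m hm Jc j (by omega)) h1 h2 _

lemma Wrec_deriv (N K : ℕ) (β h t : ℝ) (q m : ℕ → ℝ) (hm : ∀ b, 1 ≤ b → b ≤ K → 0 < m b)
    (Jc : Fin N → Fin N → ℝ) (i : Fin N) (j : ℕ) (hj : j ≤ K) (A : Fin K) (hA : A.val < K - j)
    (x : Fin K → Fin N → ℝ) :
    HasDerivAt (fun u => Wrec N K β h t q m j Jc (pth x A i u))
      (β * Real.sqrt (1 - t) * Real.sqrt (q (A.val + 1) - q A.val) *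
        Wrec N K β h t q m j Jc x * omT1 N K β h t q m (fun σ => spin (σ i)) j Jc x)
      (x A i) := by
  induction j generalizing x with
  | zero => exact Ztil_deriv N K β h t q Jc A i x
  | succ j ih =>
    obtain ⟨h1, h2⟩ := omT1_props N K β h t q m hm Jc i j (by omega)
    rw [omT1_succ N K β h t q m hm _ Jc j hj, Wrec_succ N K β h t q m Jc j hj]
    refine step_deriv (lipC_nonneg N K β t q) (hm _ (by omega) (by omega))
      (Wrec_lip N K β h t q m hm Jc j (by omega)) h1 h2 _ A ?_ i _
      (ih (by omega) (by omega)) x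
    intro e
    have := congrArg Fin.val e
    simp only at this
    omega

/-- derivatives of the normalized weights `f_b` with respect to the
one-body Gaussian field `J_i^a` (the row `A : Fin K` represents the paper level
`a = A.val + 1`), for each fixed realization of the disorder:
`∂_{J_i^a} f_b = 0` if `b < a`;
`∂_{J_i^a} f_a = β √(1−t) √(q_a − q_{a−1}) m_a f_a ω̃_a(σ_i)`;
`∂_{J_i^a} f_b = β √(1−t) √(q_a − q_{a−1}) m_b f_b (ω̃_b(σ_i) − ω̃_{b−1}(σ_i))` if `b > a`,
where `ω̃_c = omT1 … (K − c)`. -/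
theorem fWeight_field_derivs (N : ℕ) (hN : 1 ≤ N) (X : OrderParam)
    (hm : ∀ b, 1 ≤ b → b ≤ X.K → 0 < X.m b) (β h t : ℝ) (hβ : 0 ≤ β)
    (ht : t ∈ Set.Ioo (0 : ℝ) 1) (A : Fin X.K) (i : Fin N)
    (b : ℕ) (hb1 : 1 ≤ b) (hbK : b ≤ X.K)
    (Jc : Fin N → Fin N → ℝ) (Js : Fin X.K → Fin N → ℝ) :
    (b < A.val + 1 →
      HasDerivAt
        (fun u => fWeight N X.K β h t X.q X.m b
          Jc (Function.update Js A (Function.update (Js A) i u)))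
        0 (Js A i))
    ∧ (b = A.val + 1 →
      HasDerivAt
        (fun u => fWeight N X.K β h t X.q X.m b
          Jc (Function.update Js A (Function.update (Js A) i u)))
        (β * Real.sqrt (1 - t) * Real.sqrt (X.q (A.val + 1) - X.q A.val) * X.m b *
          fWeight N X.K β h t X.q X.m b Jc Js *
          omT1 N X.K β h t X.q X.m (fun σ => spin (σ i)) (X.K - b) Jc Js)
        (Js A i))
    ∧ (A.val + 1 < b →
      HasDerivAt
        (fun u => fWeight N X.K β h t X.q X.m b
          Jc (Function.update Js A (Function.update (Js A) i u)))
        (β * Real.sqrt (1 - t) * Real.sqrt (X.q (A.val + 1) - X.q A.val) * X.m b *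
          fWeight N X.K β h t X.q X.m b Jc Js *
          (omT1 N X.K β h t X.q X.m (fun σ => spin (σ i)) (X.K - b) Jc Js
            - omT1 N X.K β h t X.q X.m (fun σ => spin (σ i)) (X.K - (b - 1)) Jc Js))
        (Js A i)) := by
  have hW := fun j hj => Wrec_lip N X.K β h t X.q X.m hm Jc j hj
  have hp1 := (hW (X.K - b) (by omega)).pos Js
  have hp2 := (hW (X.K - (b - 1)) (by omega)).pos Js
  have hx : Function.update Js A (Function.update (Js A) i (Js A i)) = Js := pth_self Js A i
  refine ⟨fun hlt => ?_, fun heq => ?_, fun hgt => ?_⟩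
  · unfold fWeight Zrec
    simp_rw [Wrec_indep N X.K β h t X.q X.m Jc (X.K - b) (by omega) A (by omega),
      Wrec_indep N X.K β h t X.q X.m Jc (X.K - (b - 1)) (by omega) A (by omega)]
    exact hasDerivAt_const _ _
  · have h1 := (Wrec_deriv N X.K β h t X.q X.m hm Jc i (X.K - b) (by omega) A (by omega) Js)
    have h2 := (h1.rpow_const (p := X.m b) (Or.inl (by rw [pth_self]; exact hp1.ne'))).div_const
      (Wrec N X.K β h t X.q X.m (X.K - (b - 1)) Jc Js ^ X.m b)
    unfold fWeight Zrec
    simp_rw [Wrec_indep N X.K β h t X.q X.m Jc (X.K - (b - 1)) (by omega) A (by omega)]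
    refine HasDerivAt.congr_deriv h2 ?_
    rw [pth_self, Real.rpow_sub_one hp1.ne']
    field_simp
  · have h1 := (Wrec_deriv N X.K β h t X.q X.m hm Jc i (X.K - b) (by omega) A (by omega) Js)
    have h2 := (Wrec_deriv N X.K β h t X.q X.m hm Jc i (X.K - (b - 1)) (by omega) A
      (by omega) Js)
    have hq := Real.rpow_pos_of_pos hp2 (X.m b)
    have h3 := (h1.rpow_const (p := X.m b) (Or.inl (by rw [pth_self]; exact hp1.ne'))).fun_div
      (h2.rpow_const (p := X.m b) (Or.inl (by rw [pth_self]; exact hp2.ne')))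
      (by rw [pth_self]; exact hq.ne')
    unfold fWeight Zrec
    refine HasDerivAt.congr_deriv h3 ?_
    rw [pth_self, Real.rpow_sub_one hp1.ne', Real.rpow_sub_one hp2.ne']
    field_simp

end
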